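/- Let (Z, 𝒵) be a measurable space, μ a probability measure on Z, ι a nonempty finite type, M > 0, and φ : ι → Z → ℝ a family of measurable functions with 0 ≤ φ g z ≤ M for all g ∈ ι and z ∈ Z. Let n be a positive integer and δ ∈ (0,1). Define ℜ := ∫ Rad(fun g i => φ g (z⃗ i)) d(μ^{⊗n})(z⃗), the expectation over i.i.d. samples z⃗ : Fin n → Z drawn from the n-fold product measure μ^{⊗n} of the empirical Rademacher average. Then with μ^{⊗n}-probability at least 1 − δ over z⃗, one has max_{g ∈ ι} |∫ φ g dμ − (1/n) · ∑_{i} φ g (z⃗ i)| ≤ 2ℜ + M · √(log(2/δ)/(2n)). -/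

import Mathlib

open MeasureTheory Finset

/-- The empirical Rademacher average of a family `h : ι → Fin n → ℝ`. -/
noncomputable def rad {ι : Type*} [Fintype ι] [Nonempty ι] (n : ℕ)
    (h : ι → Fin n → ℝ) : ℝ :=
  (1 / 2 ^ n) * ∑ σ : Fin n → Bool,
    Finset.univ.sup' Finset.univ_nonempty fun g =>
      (1 / n : ℝ) * ∑ i, (if σ i then (1 : ℝ) else -1) * h g i

/-- **Hoeffding's lemma** for a bounded function whose oscillation is at most `c`. -/
lemma integral_exp_sub_integral_le_of_abs_sub_le {Z : Type*} [MeasurableSpace Z]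
    (μ : Measure Z) [IsProbabilityMeasure μ] {X : Z → ℝ} (hX : Measurable X) {B : ℝ}
    (hB : ∀ z, |X z| ≤ B) {c : ℝ} (hc : ∀ z z', |X z - X z'| ≤ c) (t : ℝ) :
    ∫ z, Real.exp (t * (X z - ∫ x, X x ∂μ)) ∂μ ≤ Real.exp ((c / 2) ^ 2 * t ^ 2 / 2) := by
  have hne : Nonempty Z := nonempty_of_isProbabilityMeasure μ
  have hbdd : BddBelow (Set.range X) := ⟨-B, by
    rintro _ ⟨z, rfl⟩
    exact (abs_le.1 (hB z)).1⟩
  have hmem : ∀ z, X z ∈ Set.Icc (sInf (Set.range X)) (sInf (Set.range X) + c) := by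
    refine fun z => ⟨csInf_le hbdd ⟨z, rfl⟩, ?_⟩
    have : X z - c ≤ sInf (Set.range X) := by
      refine le_csInf (Set.range_nonempty X) ?_
      rintro _ ⟨z', rfl⟩
      linarith [(abs_le.1 (hc z z')).2]
    linarith
  have h := (ProbabilityTheory.hasSubgaussianMGF_of_mem_Icc (μ := μ) hX.aemeasurable
    (ae_of_all _ hmem)).mgf_le t
  simpa [ProbabilityTheory.mgf, div_pow] using h

/-- The moment generating function bound behind **McDiarmid's inequality**. -/
lemma integral_exp_sub_integral_le_of_bounded_differences {Z : Type*} [MeasurableSpace Z]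
    (μ : Measure Z) [IsProbabilityMeasure μ] {B c : ℝ} (t : ℝ) (n : ℕ)
    (f : (Fin n → Z) → ℝ) (hf : Measurable f) (hB : ∀ w, |f w| ≤ B)
    (hc : ∀ w i z, |f (Function.update w i z) - f w| ≤ c) :
    ∫ w, Real.exp (t * (f w - ∫ v, f v ∂(Measure.pi fun _ : Fin n => μ)))
        ∂(Measure.pi fun _ : Fin n => μ) ≤
      Real.exp (n * ((c / 2) ^ 2 * t ^ 2 / 2)) := by
  induction n with
  | zero =>
    have h : ∀ w, f w = f default := fun w => congrArg f (Subsingleton.elim _ _)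
    simp [h]
  | succ n ih =>
    set ν := Measure.pi fun _ : Fin n => μ
    set e := MeasurableEquiv.piFinSuccAbove (fun _ : Fin (n + 1) => Z) 0
    have he : MeasurePreserving e.symm (μ.prod ν) (Measure.pi fun _ : Fin (n + 1) => μ) :=
      (measurePreserving_piFinSuccAbove (fun _ : Fin (n + 1) => μ) 0).symm e
    have hcons : ∀ p, e.symm p = (Fin.cons p.1 p.2 : Fin (n + 1) → Z) := fun p => by
      simp only [e, MeasurableEquiv.piFinSuccAbove, Fin.insertNthEquiv_zero]
      rfl
    have hfe : Measurable fun p : Z × (Fin n → Z) => f (Fin.cons p.1 p.2) := by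
      simpa only [← hcons, Function.comp_def] using hf.comp e.symm.measurable
    have hfw (w : Fin n → Z) : Measurable fun z => f (Fin.cons z w) :=
      hfe.comp measurable_prodMk_right
    have hintw (w : Fin n → Z) : Integrable (fun z => f (Fin.cons z w)) μ :=
      .of_bound (hfw w).aestronglyMeasurable B (ae_of_all _ fun _ => hB _)
    set g : (Fin n → Z) → ℝ := fun w => ∫ z, f (Fin.cons z w) ∂μ with hg
    have hgm : Measurable g := by
      have h : StronglyMeasurable (Function.uncurry fun (w : Fin n → Z) (z : Z) =>
          f (Fin.cons z w)) := (hfe.comp measurable_swap).stronglyMeasurable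
      exact h.integral_prod_right.measurable
    have hgB : ∀ w, |g w| ≤ B := fun w => by
      have h : ∀ z, ‖f (Fin.cons z w)‖ ≤ B := fun z => hB _
      simpa using norm_integral_le_of_norm_le_const (μ := μ) (ae_of_all _ h)
    have hgc : ∀ w i z, |g (Function.update w i z) - g w| ≤ c := fun w i z => by
      have h : ∀ x, ‖f (Fin.cons x (Function.update w i z)) - f (Fin.cons x w)‖ ≤ c := fun x => by
        rw [Fin.cons_update]
        exact hc _ _ _
      rw [hg, ← integral_sub (hintw _) (hintw _)]
      simpa using norm_integral_le_of_norm_le_const (μ := μ) (ae_of_all _ h)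
    have hmean : ∫ v, f v ∂(Measure.pi fun _ : Fin (n + 1) => μ) = ∫ w, g w ∂ν := by
      rw [← he.integral_comp', integral_prod_symm]
      · simp only [hcons, hg]
      · simp only [hcons]
        exact .of_bound hfe.aestronglyMeasurable B (ae_of_all _ fun _ => hB _)
    rw [hmean]
    set a := ∫ w, g w ∂ν
    have hexpB : ∀ {x : ℝ}, |x| ≤ B → ‖Real.exp (t * (x - a))‖ ≤
        Real.exp (|t| * (B + |a|)) := fun {x} hx => by
      rw [Real.norm_eq_abs, Real.abs_exp, Real.exp_le_exp]
      refine (le_abs_self _).trans ?_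
      rw [abs_mul]
      gcongr
      exact (abs_sub x a).trans (by gcongr)
    have hinner (w : Fin n → Z) : ∫ z, Real.exp (t * (f (Fin.cons z w) - a)) ∂μ ≤
        Real.exp ((c / 2) ^ 2 * t ^ 2 / 2) * Real.exp (t * (g w - a)) := by
      have h := integral_exp_sub_integral_le_of_abs_sub_le μ (hfw w) (fun z => hB _)
        (c := c) (fun z z' => by
          simpa only [Fin.update_cons_zero] using
            hc (Fin.cons z' w : Fin (n + 1) → Z) 0 z) t
      calc ∫ z, Real.exp (t * (f (Fin.cons z w) - a)) ∂μ
          = ∫ z, Real.exp (t * (f (Fin.cons z w) - g w)) * Real.exp (t * (g w - a)) ∂μ := by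
            congr with z
            rw [← Real.exp_add]
            ring_nf
        _ = (∫ z, Real.exp (t * (f (Fin.cons z w) - g w)) ∂μ) * Real.exp (t * (g w - a)) :=
            integral_mul_const _ _
        _ ≤ _ := by gcongr
    have hexpm : Measurable fun p : Z × (Fin n → Z) =>
        Real.exp (t * (f (Fin.cons p.1 p.2) - a)) :=
      ((hfe.sub_const a).const_mul t).exp
    have hexpint : Integrable (fun p : Z × (Fin n → Z) =>
        Real.exp (t * (f (Fin.cons p.1 p.2) - a))) (μ.prod ν) :=
      .of_bound hexpm.aestronglyMeasurable _ (ae_of_all _ fun _ => hexpB (hB _))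
    rw [← he.integral_comp']
    simp only [hcons]
    rw [integral_prod_symm _ hexpint]
    calc ∫ w, ∫ z, Real.exp (t * (f (Fin.cons z w) - a)) ∂μ ∂ν
        ≤ ∫ w, Real.exp ((c / 2) ^ 2 * t ^ 2 / 2) * Real.exp (t * (g w - a)) ∂ν := by
          refine integral_mono hexpint.integral_prod_right ?_ hinner
          refine Integrable.const_mul ?_ _
          refine .of_bound (Measurable.aestronglyMeasurable ?_) _ (ae_of_all _ fun w => hexpB (hgB w))
          fun_prop
      _ = Real.exp ((c / 2) ^ 2 * t ^ 2 / 2) * ∫ w, Real.exp (t * (g w - a)) ∂ν :=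
          integral_const_mul _ _
      _ ≤ Real.exp ((c / 2) ^ 2 * t ^ 2 / 2) * Real.exp (n * ((c / 2) ^ 2 * t ^ 2 / 2)) := by
          gcongr
          exact ih g hgm hgB hgc
      _ = _ := by
          rw [← Real.exp_add]
          push_cast
          ring_nf

/-- **McDiarmid's inequality** with equal difference bounds. -/
lemma measureReal_ge_le_of_bounded_differences {Z : Type*} [MeasurableSpace Z]
    (μ : Measure Z) [IsProbabilityMeasure μ] {B c : ℝ} (n : ℕ)
    (f : (Fin n → Z) → ℝ) (hf : Measurable f) (hB : ∀ w, |f w| ≤ B)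
    (hc : ∀ w i z, |f (Function.update w i z) - f w| ≤ c) {ε : ℝ} (hε : 0 ≤ ε) :
    (Measure.pi fun _ : Fin n => μ).real
        {w | ε ≤ f w - ∫ v, f v ∂(Measure.pi fun _ : Fin n => μ)} ≤
      Real.exp (-ε ^ 2 / (2 * (n * (c / 2) ^ 2))) := by
  have h : ProbabilityTheory.HasSubgaussianMGF
      (fun w => f w - ∫ v, f v ∂(Measure.pi fun _ : Fin n => μ))
      ⟨n * (c / 2) ^ 2, by positivity⟩ (Measure.pi fun _ : Fin n => μ) := by
    set a := ∫ v, f v ∂(Measure.pi fun _ : Fin n => μ) with ha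
    refine ⟨fun t => ?_, fun t => ?_⟩
    · refine .of_bound (C := Real.exp (|t| * (B + |a|)))
        (Measurable.aestronglyMeasurable (by fun_prop)) (ae_of_all _ fun w => ?_)
      rw [Real.norm_eq_abs, Real.abs_exp, Real.exp_le_exp]
      refine (le_abs_self _).trans ?_
      rw [abs_mul]
      gcongr
      exact (abs_sub _ a).trans (by gcongr; exact hB w)
    · refine (integral_exp_sub_integral_le_of_bounded_differences μ t n f hf hB hc).trans_eq ?_
      congr 1
      change _ = n * (c / 2) ^ 2 * t ^ 2 / 2
      ring
  exact h.measure_ge_le hε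

section Max

variable {ι : Type*} [Fintype ι] [Nonempty ι]

lemma sup'_univ_add_le (a b : ι → ℝ) :
    (univ.sup' univ_nonempty fun g => a g + b g) ≤
      univ.sup' univ_nonempty a + univ.sup' univ_nonempty b :=
  sup'_le _ _ fun _ hg => add_le_add (le_sup' a hg) (le_sup' b hg)

lemma abs_sup'_univ_le {a : ι → ℝ} {B : ℝ} (h : ∀ g, |a g| ≤ B) :
    |univ.sup' univ_nonempty a| ≤ B := by
  obtain ⟨g, -, hg⟩ := exists_mem_eq_sup' (univ_nonempty (α := ι)) a
  rw [hg]
  exact h g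

lemma sup'_univ_sub_le {a b : ι → ℝ} {c : ℝ} (h : ∀ g, a g - b g ≤ c) :
    univ.sup' univ_nonempty a - univ.sup' univ_nonempty b ≤ c := by
  rw [sub_le_iff_le_add]
  exact sup'_le _ _ fun g hg => by linarith [h g, le_sup' b hg]

lemma abs_sup'_univ_sub_le {a b : ι → ℝ} {c : ℝ} (h : ∀ g, |a g - b g| ≤ c) :
    |univ.sup' univ_nonempty a - univ.sup' univ_nonempty b| ≤ c := by
  refine abs_sub_le_iff.2 ⟨sup'_univ_sub_le fun g => (abs_le.1 (h g)).2,
    sup'_univ_sub_le fun g => ?_⟩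
  linarith [(abs_le.1 (h g)).1]

lemma measurable_sup'_univ {α : Type*} [MeasurableSpace α] {a : ι → α → ℝ}
    (h : ∀ g, Measurable (a g)) :
    Measurable fun x => univ.sup' univ_nonempty fun g => a g x := by
  convert! Finset.measurable_sup' (univ_nonempty (α := ι)) fun g _ => h g using 1
  ext x
  simp

end Max

lemma abs_average_le {n : ℕ} (hn : 0 < n) {a : Fin n → ℝ} {B : ℝ} (h : ∀ i, |a i| ≤ B) :
    |(1 / n : ℝ) * ∑ i, a i| ≤ B := by
  have hn' : (0 : ℝ) < n := by exact_mod_cast hn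
  rw [abs_mul, abs_of_pos (by positivity), one_div, inv_mul_le_iff₀ hn']
  refine (abs_sum_le_sum_abs _ _).trans ((sum_le_sum fun i _ => h i).trans_eq ?_)
  simp

lemma abs_sign_mul (b : Bool) (x : ℝ) : |(if b then (1 : ℝ) else -1) * x| = |x| := by
  cases b <;> simp

lemma rad_neg {ι : Type*} [Fintype ι] [Nonempty ι] (n : ℕ) (h : ι → Fin n → ℝ) :
    rad n (fun g i => -h g i) = rad n h := by
  unfold rad
  congr 1
  refine Fintype.sum_equiv (Equiv.piCongrRight fun _ : Fin n => Equiv.boolNot) _ _ fun σ => ?_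
  congr 1
  ext g
  congr 1
  refine sum_congr rfl fun i _ => ?_
  cases hσ : σ i <;> simp [hσ]

section Symmetrization

variable {Z : Type*} [MeasurableSpace Z] (μ : Measure Z) [IsProbabilityMeasure μ]
  {ι : Type*} [Fintype ι] [Nonempty ι] {ψ : ι → Z → ℝ} {n : ℕ}

/-- Exchanging the two samples in some coordinates does not change the law of the pair. -/
lemma integral_sup'_sign_sub_eq (σ : Fin n → Bool) (ψ : ι → Z → ℝ) :
    ∫ p, univ.sup' univ_nonempty (fun g => (1 / n : ℝ) *
        ∑ i, (if σ i then (1 : ℝ) else -1) * (ψ g (p i).1 - ψ g (p i).2))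
        ∂(Measure.pi fun _ : Fin n => μ.prod μ) =
      ∫ p, univ.sup' univ_nonempty (fun g => (1 / n : ℝ) * ∑ i, (ψ g (p i).1 - ψ g (p i).2))
        ∂(Measure.pi fun _ : Fin n => μ.prod μ) := by
  set e : (Fin n → Z × Z) ≃ᵐ (Fin n → Z × Z) := MeasurableEquiv.piCongrRight fun i =>
    if σ i then MeasurableEquiv.refl _ else MeasurableEquiv.prodComm
  have he : MeasurePreserving e (Measure.pi fun _ : Fin n => μ.prod μ)
      (Measure.pi fun _ : Fin n => μ.prod μ) := by
    refine measurePreserving_pi _ _ (f := fun i =>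
      ⇑(if σ i then MeasurableEquiv.refl (Z × Z) else MeasurableEquiv.prodComm)) fun i => ?_
    cases hσ : σ i
    · exact Measure.measurePreserving_swap
    · exact .id _
  rw [← he.integral_comp']
  congr with p
  congr with g
  congr 1
  refine sum_congr rfl fun i _ => ?_
  have hei : e p i = (if σ i then MeasurableEquiv.refl (Z × Z) else MeasurableEquiv.prodComm) (p i) :=
    rfl
  rw [hei]
  cases hσ : σ i <;> simp [MeasurableEquiv.prodComm]

/-- **Symmetrization**: the expected maximal deviation of the empirical means is at most twice
the expected Rademacher average. -/
lemma integral_sup'_sub_average_le_two_mul_integral_rad (hn : 0 < n)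
    (hψ : ∀ g, Measurable (ψ g)) {B : ℝ} (hB : ∀ g z, |ψ g z| ≤ B) :
    ∫ w, univ.sup' univ_nonempty (fun g => (∫ z, ψ g z ∂μ) - (1 / n : ℝ) * ∑ i, ψ g (w i))
        ∂(Measure.pi fun _ : Fin n => μ) ≤
      2 * ∫ w, rad n (fun g i => ψ g (w i)) ∂(Measure.pi fun _ : Fin n => μ) := by
  set P := Measure.pi fun _ : Fin n => μ
  set Q := Measure.pi fun _ : Fin n => μ.prod μ
  set T : (Fin n → Bool) → (Fin n → Z) → ℝ := fun σ w => univ.sup' univ_nonempty fun g =>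
    (1 / n : ℝ) * ∑ i, (if σ i then (1 : ℝ) else -1) * ψ g (w i) with hT
  have hTm σ : Measurable (T σ) := measurable_sup'_univ fun g => by fun_prop
  have hTB σ w : ‖T σ w‖ ≤ B := abs_sup'_univ_le fun g => abs_average_le hn fun i => by
    rw [abs_sign_mul]
    exact hB _ _
  have hTint σ : Integrable (T σ) P :=
    .of_bound (hTm σ).aestronglyMeasurable B (ae_of_all _ (hTB σ))
  have hfst : MeasurePreserving (fun (p : Fin n → Z × Z) i => (p i).1) Q P :=
    measurePreserving_pi _ _ fun _ => measurePreserving_fst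
  have hsnd : MeasurePreserving (fun (p : Fin n → Z × Z) i => (p i).2) Q P :=
    measurePreserving_pi _ _ fun _ => measurePreserving_snd
  set D : (Fin n → Z) × (Fin n → Z) → ℝ := fun p => univ.sup' univ_nonempty fun g =>
    (1 / n : ℝ) * ∑ i, (ψ g (p.1 i) - ψ g (p.2 i))
  have hDm : Measurable D := measurable_sup'_univ fun g => by fun_prop
  have hDB p : ‖D p‖ ≤ B + B := abs_sup'_univ_le fun g => abs_average_le hn fun i =>
    (abs_sub _ _).trans (add_le_add (hB _ _) (hB _ _))
  have hDint : Integrable D (P.prod P) :=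
    .of_bound hDm.aestronglyMeasurable _ (ae_of_all _ hDB)
  have hψint g : Integrable (ψ g) μ :=
    .of_bound (hψ g).aestronglyMeasurable B (ae_of_all _ (hB g))
  have hmean g : ∫ w, (1 / n : ℝ) * ∑ i, ψ g (w i) ∂P = ∫ z, ψ g z ∂μ := by
    rw [integral_const_mul, integral_finsetSum]
    · have hn' : (n : ℝ) ≠ 0 := by positivity
      have h (i : Fin n) : ∫ w, ψ g (w i) ∂P = ∫ z, ψ g z ∂μ :=
        integral_comp_eval (μ := fun _ : Fin n => μ) (hψint g).aestronglyMeasurable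
      simp [h, hn']
    · exact fun i _ => (measurePreserving_eval (fun _ : Fin n => μ) i).integrable_comp_of_integrable
        (hψint g)
  have hghost w' : univ.sup' univ_nonempty
      (fun g => (∫ z, ψ g z ∂μ) - (1 / n : ℝ) * ∑ i, ψ g (w' i)) ≤ ∫ w, D (w, w') ∂P := by
    have hw' : Integrable (fun w => D (w, w')) P :=
      .of_bound (hDm.comp measurable_prodMk_right).aestronglyMeasurable _
        (ae_of_all _ fun _ => hDB _)
    refine sup'_le _ _ fun g hg => ?_
    have havg : Integrable (fun w : Fin n → Z => (1 / n : ℝ) * ∑ i, ψ g (w i)) P :=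
      .of_bound (Measurable.aestronglyMeasurable (by fun_prop)) B
        (ae_of_all _ fun w => abs_average_le hn fun i => hB _ _)
    calc (∫ z, ψ g z ∂μ) - (1 / n : ℝ) * ∑ i, ψ g (w' i)
        = ∫ w, ((1 / n : ℝ) * ∑ i, ψ g (w i)) - (1 / n : ℝ) * ∑ i, ψ g (w' i) ∂P := by
          rw [integral_sub havg (integrable_const _), hmean]
          simp
      _ ≤ ∫ w, D (w, w') ∂P := by
          refine integral_mono (havg.sub (integrable_const _)) hw' fun w => ?_
          refine le_trans (le_of_eq ?_) (le_sup' (fun g => (1 / n : ℝ) *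
            ∑ i, (ψ g (w i) - ψ g (w' i))) hg)
          simp only [sum_sub_distrib, mul_sub]
  have hghost_int : ∫ w, univ.sup' univ_nonempty
      (fun g => (∫ z, ψ g z ∂μ) - (1 / n : ℝ) * ∑ i, ψ g (w i)) ∂P ≤
      ∫ p, univ.sup' univ_nonempty (fun g => (1 / n : ℝ) * ∑ i, (ψ g (p i).1 - ψ g (p i).2)) ∂Q := by
    have hbd g : |∫ z, ψ g z ∂μ| ≤ B := by
      have h : ∀ z, ‖ψ g z‖ ≤ B := hB g
      simpa using norm_integral_le_of_norm_le_const (μ := μ) (ae_of_all _ h)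
    calc _ ≤ ∫ w', ∫ w, D (w, w') ∂P ∂P := by
          refine integral_mono ?_ hDint.integral_prod_right hghost
          refine .of_bound (Measurable.aestronglyMeasurable
            (measurable_sup'_univ fun g => by fun_prop)) (B + B) (ae_of_all _ fun w => ?_)
          exact abs_sup'_univ_le fun g => (abs_sub _ _).trans
            (add_le_add (hbd g) (abs_average_le hn fun i => hB _ _))
      _ = ∫ p, D p ∂(P.prod P) := (integral_prod_symm _ hDint).symm
      _ = _ := ((measurePreserving_arrowProdEquivProdArrow Z Z (Fin n) (fun _ => μ)
          (fun _ => μ)).integral_comp' D).symm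
  have hflip (σ : Fin n → Bool) : T (fun i => !σ i) = fun w => univ.sup' univ_nonempty fun g =>
      (1 / n : ℝ) * ∑ i, -((if σ i then (1 : ℝ) else -1) * ψ g (w i)) := by
    ext w
    simp only [hT]
    congr with g
    congr 1
    refine sum_congr rfl fun i _ => ?_
    rcases Bool.eq_false_or_eq_true (σ i) with h | h <;> simp [h]
  have hσ (σ : Fin n → Bool) : ∫ w, univ.sup' univ_nonempty
      (fun g => (∫ z, ψ g z ∂μ) - (1 / n : ℝ) * ∑ i, ψ g (w i)) ∂P ≤
      ∫ w, T σ w ∂P + ∫ w, T (fun i => !σ i) w ∂P := by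
    refine hghost_int.trans ?_
    rw [← integral_sup'_sign_sub_eq μ σ ψ]
    have h1 : Integrable (fun p : Fin n → Z × Z => T σ fun i => (p i).1) Q :=
      hfst.integrable_comp_of_integrable (hTint σ)
    have h2 : Integrable (fun p : Fin n → Z × Z => T (fun i => !σ i) fun i => (p i).2) Q :=
      hsnd.integrable_comp_of_integrable (hTint fun i => !σ i)
    rw [← hfst.map_eq, integral_map hfst.aemeasurable (hTm _).aestronglyMeasurable, hfst.map_eq,
      ← hsnd.map_eq, integral_map hsnd.aemeasurable (hTm _).aestronglyMeasurable,
      ← integral_add h1 h2]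
    refine integral_mono ?_ (h1.add h2) fun p => ?_
    · refine .of_bound (Measurable.aestronglyMeasurable
        (measurable_sup'_univ fun g => by fun_prop)) (B + B) (ae_of_all _ fun p => ?_)
      refine abs_sup'_univ_le fun g => abs_average_le hn fun i => ?_
      rw [abs_sign_mul]
      exact (abs_sub _ _).trans (add_le_add (hB _ _) (hB _ _))
    · rw [hflip]
      refine le_trans (le_of_eq ?_) (sup'_univ_add_le _ _)
      congr with g
      rw [← mul_add, ← sum_add_distrib]
      simp only [sub_eq_add_neg, mul_add, mul_neg]
  have hrad : ∫ w, rad n (fun g i => ψ g (w i)) ∂P =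
      (1 / 2 ^ n) * ∑ σ, ∫ w, T σ w ∂P := by
    rw [← integral_finsetSum _ fun σ _ => hTint σ, ← integral_const_mul]
    rfl
  have hneg : ∑ σ : Fin n → Bool, ∫ w, T (fun i => !σ i) w ∂P = ∑ σ, ∫ w, T σ w ∂P :=
    Fintype.sum_equiv (Equiv.piCongrRight fun _ : Fin n => Equiv.boolNot) _ _ fun _ => rfl
  have hsum := sum_le_sum fun σ (_ : σ ∈ (univ : Finset (Fin n → Bool))) => hσ σ
  rw [sum_add_distrib, hneg, sum_const, nsmul_eq_mul] at hsum
  simp only [card_univ, Fintype.card_pi, Fintype.card_bool, prod_const, Fintype.card_fin] at hsum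
  push_cast at hsum
  rw [hrad, mul_left_comm, one_div (2 ^ n : ℝ), le_inv_mul_iff₀ (by positivity)]
  linarith

/-- The one-sided uniform deviation bound. -/
lemma measureReal_lt_sup'_sub_average_le (hn : 0 < n)
    (hψ : ∀ g, Measurable (ψ g)) {B M : ℝ} (hB : ∀ g z, |ψ g z| ≤ B)
    (hM : ∀ g z z', |ψ g z - ψ g z'| ≤ M) {ε : ℝ} (hε : 0 ≤ ε) :
    (Measure.pi fun _ : Fin n => μ).real {w |
        2 * (∫ v, rad n (fun g i => ψ g (v i)) ∂(Measure.pi fun _ : Fin n => μ)) + ε <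
        univ.sup' univ_nonempty (fun g => (∫ z, ψ g z ∂μ) - (1 / n : ℝ) * ∑ i, ψ g (w i))} ≤
      Real.exp (-(2 * n * ε ^ 2) / M ^ 2) := by
  have hn' : (n : ℝ) ≠ 0 := by positivity
  have hbd g : |∫ z, ψ g z ∂μ| ≤ B := by
    have h : ∀ z, ‖ψ g z‖ ≤ B := hB g
    simpa using norm_integral_le_of_norm_le_const (μ := μ) (ae_of_all _ h)
  have h := measureReal_ge_le_of_bounded_differences μ (B := B + B) (c := M / n) n
    (fun w => univ.sup' univ_nonempty
      (fun g => (∫ z, ψ g z ∂μ) - (1 / n : ℝ) * ∑ i, ψ g (w i)))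
    (measurable_sup'_univ fun g => by fun_prop)
    (fun w => abs_sup'_univ_le fun g => (abs_sub _ _).trans
      (add_le_add (hbd g) (abs_average_le hn fun i => hB _ _)))
    (fun w i z => abs_sup'_univ_sub_le fun g => by
      rw [sub_sub_sub_cancel_left, ← mul_sub, ← sum_sub_distrib,
        sum_eq_single i (fun j _ hj => by simp [hj]) (by simp), Function.update_self,
        abs_mul, abs_of_nonneg (by positivity), one_div, inv_mul_eq_div]
      gcongr
      exact hM _ _ _) hε
  refine (measureReal_mono fun w hw => ?_).trans (h.trans_eq ?_)
  · have := integral_sup'_sub_average_le_two_mul_integral_rad μ hn hψ hB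
    simp only [Set.mem_ofPred_eq] at hw ⊢
    linarith
  · congr 1
    rcases eq_or_ne M 0 with rfl | hM0
    · simp
    · field_simp

end Symmetrization


/-- Lemma 3 of the paper (uniform deviation bound via McDiarmid and
symmetrization), for a finite function class: with probability at least `1 - δ`
over an i.i.d. sample of size `n`, the maximal deviation between population and
empirical means is at most `2ℜ + M·√(log(2/δ)/(2n))`, where `ℜ` is the expected
Rademacher average. -/
theorem uniform_deviation_bound
    {Z : Type*} [MeasurableSpace Z] (μ : Measure Z) [IsProbabilityMeasure μ]
    (ι : Type*) [Fintype ι] [Nonempty ι]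
    (M : ℝ) (hM : 0 < M)
    (φ : ι → Z → ℝ) (hmeas : ∀ g : ι, Measurable (φ g))
    (hbound : ∀ (g : ι) (z : Z), 0 ≤ φ g z ∧ φ g z ≤ M)
    (n : ℕ) (hn : 0 < n) (δ : ℝ) (hδ : 0 < δ) (hδ1 : δ < 1) :
    ENNReal.ofReal (1 - δ) ≤
      (Measure.pi fun _ : Fin n => μ) {zvec : Fin n → Z |
        (Finset.univ.sup' Finset.univ_nonempty fun g : ι =>
            |(∫ z, φ g z ∂μ) - (1 / n : ℝ) * ∑ i, φ g (zvec i)|) ≤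
          2 * (∫ w, rad n (fun g i => φ g (w i)) ∂(Measure.pi fun _ : Fin n => μ)) +
            M * Real.sqrt (Real.log (2 / δ) / (2 * n))} := by

  have hn' : (0 : ℝ) < n := by exact_mod_cast hn
  set P := Measure.pi fun _ : Fin n => μ
  set R := ∫ w, rad n (fun g i => φ g (w i)) ∂P
  set ε := M * Real.sqrt (Real.log (2 / δ) / (2 * n)) with hε_def
  have hε : 0 ≤ ε := by positivity
  have hlog : 0 ≤ Real.log (2 / δ) := Real.log_nonneg (by rw [le_div_iff₀ hδ]; linarith)
  have hexp : Real.exp (-(2 * n * ε ^ 2) / M ^ 2) = δ / 2 := by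
    have h : -(2 * n * ε ^ 2) / M ^ 2 = -Real.log (2 / δ) := by
      rw [hε_def, mul_pow, Real.sq_sqrt (by positivity)]
      field_simp
    rw [h, Real.exp_neg, Real.exp_log (by positivity), inv_div]
  have hB g z : |φ g z| ≤ M := abs_le.2 ⟨by linarith [(hbound g z).1], (hbound g z).2⟩
  have hosc g z z' : |φ g z - φ g z'| ≤ M := abs_le.2
    ⟨by linarith [(hbound g z).1, (hbound g z').2], by linarith [(hbound g z).2, (hbound g z').1]⟩
  have hupper := measureReal_lt_sup'_sub_average_le μ hn hmeas hB hosc hε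
  have hlower := measureReal_lt_sup'_sub_average_le μ (ψ := fun g z => -φ g z) hn
    (fun g => (hmeas g).neg) (B := M) (M := M) (fun g z => by simpa using hB g z)
    (fun g z z' => by simpa [neg_add_eq_sub] using hosc g z' z) hε
  simp only [rad_neg] at hlower
  rw [hexp] at hupper hlower
  set U := {w : Fin n → Z | 2 * R + ε < univ.sup' univ_nonempty
    (fun g => (∫ z, φ g z ∂μ) - (1 / n : ℝ) * ∑ i, φ g (w i))}
  set L := {w : Fin n → Z | 2 * R + ε < univ.sup' univ_nonempty
    (fun g => (∫ z, -φ g z ∂μ) - (1 / n : ℝ) * ∑ i, -φ g (w i))}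
  set S := {w : Fin n → Z | (univ.sup' univ_nonempty fun g : ι =>
    |(∫ z, φ g z ∂μ) - (1 / n : ℝ) * ∑ i, φ g (w i)|) ≤ 2 * R + ε}
  have hS : MeasurableSet S := measurableSet_le
    (measurable_sup'_univ fun g => by
      simp only [← Real.norm_eq_abs]
      fun_prop) measurable_const
  have hsub : Sᶜ ⊆ U ∪ L := by
    intro w hw
    simp only [S, Set.mem_compl_iff, Set.mem_ofPred_eq, not_le, lt_sup'_iff] at hw
    obtain ⟨g, hg, hw⟩ := hw
    simp only [U, L, Set.mem_union, Set.mem_ofPred_eq, lt_sup'_iff]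
    rcases lt_abs.1 hw with h | h
    · exact .inl ⟨g, hg, h⟩
    · refine .inr ⟨g, hg, h.trans_eq ?_⟩
      rw [integral_neg, sum_neg_distrib]
      ring
  have hcompl : P.real Sᶜ ≤ δ := by
    have := (measureReal_mono hsub).trans (measureReal_union_le (μ := P) U L)
    linarith
  rw [probReal_compl_eq_one_sub hS] at hcompl
  exact ENNReal.ofReal_le_of_le_toReal (by change 1 - δ ≤ P.real S; linarith)
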